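/- arXiv:2204.09880 — 5 statements merged into one kernel-verified Lean document; each statement's English description precedes it below -/
import Mathlib

section
/- Let τ > 0 and define the curves c₁, c₂ : [−1,1] → ℝ³ by c₁(u) = (√(1 − u²) sin(τ u), −√(1 − u²) cos(τ u), u) and c₂(u) = (−√(1 − u²) sin(τ u), √(1 − u²) cos(τ u), u). Then the tangency set Γ = { x ∈ ℝ³ : |x| = 1, x₁ cos(τ x₃) + x₂ sin(τ x₃) = 0 } equals the union of the range of c₁ on [−1,1] and the range of c₂ on [−1,1]. -/
noncomputable section

/-- First branch of the tangency curve. -/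
def c₁ (τ u : ℝ) : Fin 3 → ℝ :=
  ![Real.sqrt (1 - u ^ 2) * Real.sin (τ * u),
    -(Real.sqrt (1 - u ^ 2) * Real.cos (τ * u)), u]

/-- Second branch of the tangency curve. -/
def c₂ (τ u : ℝ) : Fin 3 → ℝ :=
  ![-(Real.sqrt (1 - u ^ 2) * Real.sin (τ * u)),
    Real.sqrt (1 - u ^ 2) * Real.cos (τ * u), u]

/-!
The condition `x₀ cos (τ x₂) + x₁ sin (τ x₂) = 0` cuts out a helicoid, ruled by horizontal lines
through the vertical axis. In the coordinates given by the signed distance `w` to the axis and the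
height `u`, the Euclidean norm on the helicoid is `√(w² + u²)`, so the part on the unit sphere is
the image of the unit circle of the `(w, u)`-plane. The two semicircles `w = ±√(1 - u²)` are the
two branches.
-/

section

open Real Set

theorem mul_add_mul_eq_zero_iff_of_isCoprime {R : Type*} [CommRing R] {a b : R}
    (hab : IsCoprime a b) (x y : R) :
    x * a + y * b = 0 ↔ ∃ w, x = w * b ∧ y = -(w * a) := by
  constructor
  · intro hxy
    obtain ⟨s, t, hst⟩ := hab
    refine ⟨t * x - s * y, ?_, ?_⟩
    · linear_combination s * hxy - x * hst
    · linear_combination t * hxy - y * hst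
  · rintro ⟨w, rfl, rfl⟩
    ring

theorem isCoprime_cos_sin (θ : ℝ) : IsCoprime (cos θ) (sin θ) :=
  ⟨cos θ, sin θ, by simpa only [sq] using cos_sq_add_sin_sq θ⟩

/-- Parametrization of the generalized helicoid with angle function `φ`: the point at height `p.2`
and signed distance `p.1` from the vertical axis, along the horizontal direction orthogonal to
`(cos (φ p.2), sin (φ p.2))`. A linear `φ` gives the usual helicoid. -/
def helicoid (φ : ℝ → ℝ) (p : ℝ × ℝ) : Fin 3 → ℝ :=
  ![p.1 * sin (φ p.2), -(p.1 * cos (φ p.2)), p.2]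

theorem range_helicoid (φ : ℝ → ℝ) :
    range (helicoid φ) = {x | x 0 * cos (φ (x 2)) + x 1 * sin (φ (x 2)) = 0} := by
  ext x
  rw [mem_ofPred_eq, mul_add_mul_eq_zero_iff_of_isCoprime (isCoprime_cos_sin _)]
  constructor
  · rintro ⟨⟨w, u⟩, rfl⟩
    exact ⟨w, rfl, rfl⟩
  · rintro ⟨w, h₀, h₁⟩
    refine ⟨(w, x 2), ?_⟩
    ext i
    fin_cases i
    exacts [h₀.symm, h₁.symm, rfl]

theorem norm_toLp_helicoid (φ : ℝ → ℝ) (p : ℝ × ℝ) :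
    ‖WithLp.toLp 2 (helicoid φ p)‖ = √(p.1 ^ 2 + p.2 ^ 2) := by
  rw [EuclideanSpace.norm_eq]
  congr 1
  simp only [helicoid, Fin.sum_univ_three, norm_eq_abs, sq_abs, Matrix.cons_val]
  linear_combination p.1 ^ 2 * sin_sq_add_cos_sq (φ p.2)

theorem sq_add_sq_eq_sq_iff_eq_sqrt_or {r : ℝ} (hr : 0 ≤ r) (w u : ℝ) :
    w ^ 2 + u ^ 2 = r ^ 2 ↔
      u ∈ Icc (-r) r ∧ (w = √(r ^ 2 - u ^ 2) ∨ w = -√(r ^ 2 - u ^ 2)) := by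
  rw [mem_Icc, ← abs_le, ← sq_le_sq₀ (abs_nonneg u) hr, sq_abs, ← sq_eq_sq_iff_eq_or_eq_neg]
  constructor
  · intro h
    have hu : u ^ 2 ≤ r ^ 2 := by linarith [sq_nonneg w]
    exact ⟨hu, by rw [sq_sqrt (sub_nonneg.2 hu)]; linarith⟩
  · rintro ⟨hu, hw⟩
    rw [hw, sq_sqrt (sub_nonneg.2 hu), sub_add_cancel]

theorem circle_eq_union_semicircles {r : ℝ} (hr : 0 ≤ r) :
    {p : ℝ × ℝ | p.1 ^ 2 + p.2 ^ 2 = r ^ 2} =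
      (fun u ↦ (√(r ^ 2 - u ^ 2), u)) '' Icc (-r) r ∪
        (fun u ↦ (-√(r ^ 2 - u ^ 2), u)) '' Icc (-r) r := by
  ext ⟨w, u⟩
  simp only [mem_ofPred_eq, sq_add_sq_eq_sq_iff_eq_sqrt_or hr, mem_union, mem_image, Prod.mk.injEq,
    exists_eq_right_right, and_or_left, eq_comm (a := w)]

theorem sphere_inter_helicoid_eq_image_circle (φ : ℝ → ℝ) {r : ℝ} (hr : 0 ≤ r) :
    {x : Fin 3 → ℝ | ‖WithLp.toLp 2 x‖ = r} ∩ range (helicoid φ) =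
      helicoid φ '' {p | p.1 ^ 2 + p.2 ^ 2 = r ^ 2} := by
  rw [← image_preimage_eq_inter_range]
  congr 1
  ext p
  rw [mem_preimage, mem_ofPred_eq, mem_ofPred_eq, norm_toLp_helicoid,
    sqrt_eq_iff_eq_sq (by positivity) hr]

theorem stmt_4_general (φ : ℝ → ℝ) {r : ℝ} (hr : 0 ≤ r) :
    {x : Fin 3 → ℝ | ‖WithLp.toLp 2 x‖ = r ∧
        x 0 * cos (φ (x 2)) + x 1 * sin (φ (x 2)) = 0} =
      (fun u ↦ helicoid φ (√(r ^ 2 - u ^ 2), u)) '' Icc (-r) r ∪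
        (fun u ↦ helicoid φ (-√(r ^ 2 - u ^ 2), u)) '' Icc (-r) r := by
  rw [ofPred_and, ← range_helicoid, sphere_inter_helicoid_eq_image_circle φ hr,
    circle_eq_union_semicircles hr, image_union, image_image, image_image]

theorem c₁_eq_helicoid (τ : ℝ) :
    c₁ τ = fun u ↦ helicoid (fun v ↦ τ * v) (√(1 - u ^ 2), u) :=
  rfl

theorem c₂_eq_helicoid (τ : ℝ) :
    c₂ τ = fun u ↦ helicoid (fun v ↦ τ * v) (-√(1 - u ^ 2), u) := by
  funext u
  simp only [c₂, helicoid, neg_mul, neg_neg]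

end

/-- The tangency set `Γ` of the helical field on the unit sphere is the union of the two
branches `c₁` and `c₂` over `[-1,1]`. -/
theorem stmt_4 (τ : ℝ) (hτ : 0 < τ) :
    {x : Fin 3 → ℝ | ‖(WithLp.equiv 2 (Fin 3 → ℝ)).symm x‖ = 1 ∧
        x 0 * Real.cos (τ * x 2) + x 1 * Real.sin (τ * x 2) = 0}
      = c₁ τ '' Set.Icc (-1 : ℝ) 1 ∪ c₂ τ '' Set.Icc (-1 : ℝ) 1 := by
  simpa only [c₁_eq_helicoid, c₂_eq_helicoid, one_pow, WithLp.equiv_symm_apply] using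
    stmt_4_general (fun u ↦ τ * u) zero_le_one
end
end

section
/- Let τ > 0 and define c₃ : (−1,1) → ℝ³ by c₃(ρ) = (ρ sin(τ √(1 − ρ²)), −ρ cos(τ √(1 − ρ²)), √(1 − ρ²)). Then for every ρ ∈ (−1,1), the point c₃(ρ) lies on the unit sphere and satisfies the tangency equation x₁ cos(τ x₃) + x₂ sin(τ x₃) = 0 (so c₃(ρ) ∈ Γ), and c₃ is infinitely differentiable on (−1,1) with c₃′(0) ≠ 0. -/
noncomputable section

/-- The chart `c₃(ρ) = (ρ sin(τ √(1 − ρ²)), −ρ cos(τ √(1 − ρ²)), √(1 − ρ²))` of the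
tangency curve near the north pole. -/
def c₃ (τ ρ : ℝ) : Fin 3 → ℝ :=
  ![ρ * Real.sin (τ * Real.sqrt (1 - ρ ^ 2)),
    -(ρ * Real.cos (τ * Real.sqrt (1 - ρ ^ 2))),
    Real.sqrt (1 - ρ ^ 2)]

/-!
The point `c₃ τ ρ` has height `z = √(1 - ρ ^ 2)` and horizontal part `ρ • (sin θ, -cos θ)`, where
`θ = τ * z`. The vector `(sin θ, -cos θ)` is a unit vector orthogonal to the field direction
`(cos θ, sin θ)`, which gives both equations of `Γ`. At `ρ = 0` the height is stationary and the
factor `ρ` vanishes, so the velocity is `(sin τ, -cos τ, 0)`, which has Euclidean norm one.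
-/

open Real Set

theorem hasDerivAt_id_smul_zero {𝕜 E : Type*} [NontriviallyNormedField 𝕜] [NormedAddCommGroup E]
    [NormedSpace 𝕜 E] {f : 𝕜 → E} (hf : ContinuousAt f 0) :
    HasDerivAt (fun x ↦ x • f x) (f 0) 0 := by
  rw [hasDerivAt_iff_tendsto_slope]
  refine (hf.tendsto.mono_left nhdsWithin_le_nhds).congr' ?_
  filter_upwards [self_mem_nhdsWithin] with x hx
  simp [slope_def_module, inv_smul_smul₀ (show x ≠ 0 from hx)]

theorem one_sub_sq_pos {R : Type*} [CommRing R] [LinearOrder R] [IsStrictOrderedRing R] {x : R}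
    (hx : x ∈ Ioo (-1) 1) : 0 < 1 - x ^ 2 :=
  sub_pos.2 ((sq_lt_one_iff_abs_lt_one x).2 (abs_lt.2 hx))

theorem contDiffOn_sqrt_one_sub_sq {n : WithTop ℕ∞} :
    ContDiffOn ℝ n (fun x ↦ √(1 - x ^ 2)) (Ioo (-1) 1) :=
  ContDiffOn.sqrt (by fun_prop) fun _ hx ↦ (one_sub_sq_pos hx).ne'

theorem hasDerivAt_sqrt_one_sub_sq_zero : HasDerivAt (fun x : ℝ ↦ √(1 - x ^ 2)) 0 0 := by
  simpa using (((hasDerivAt_id (0 : ℝ)).pow 2).const_sub 1).sqrt (by simp)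

theorem norm_cylindrical (r θ z : ℝ) :
    ‖!₂[r * sin θ, -(r * cos θ), z]‖ = √(r ^ 2 + z ^ 2) := by
  rw [EuclideanSpace.norm_eq]
  congr 1
  simp only [Fin.sum_univ_three, norm_eq_abs, sq_abs, Matrix.cons_val]
  linear_combination r ^ 2 * sin_sq_add_cos_sq θ

theorem norm_c₃ (τ : ℝ) {ρ : ℝ} (hρ : ρ ^ 2 ≤ 1) : ‖WithLp.toLp 2 (c₃ τ ρ)‖ = 1 := by
  rw [c₃, norm_cylindrical, sq_sqrt (sub_nonneg.2 hρ), add_sub_cancel, sqrt_one]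

theorem c₃_tangency (τ ρ : ℝ) :
    c₃ τ ρ 0 * cos (τ * c₃ τ ρ 2) + c₃ τ ρ 1 * sin (τ * c₃ τ ρ 2) = 0 := by
  simp only [c₃, Matrix.cons_val]
  ring

theorem contDiffOn_c₃ (τ : ℝ) {n : WithTop ℕ∞} : ContDiffOn ℝ n (c₃ τ) (Ioo (-1) 1) := by
  have hheight := contDiffOn_sqrt_one_sub_sq (n := n)
  have hphase := contDiffOn_const (c := τ).mul hheight
  rw [contDiffOn_pi]
  intro i
  fin_cases i
  · exact contDiffOn_id.mul hphase.sin
  · exact (contDiffOn_id.mul hphase.cos).neg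
  · exact hheight

theorem hasDerivAt_c₃_zero (τ : ℝ) : HasDerivAt (c₃ τ) ![sin τ, -cos τ, 0] 0 := by
  have hsin := hasDerivAt_id_smul_zero (f := fun ρ : ℝ ↦ sin (τ * √(1 - ρ ^ 2))) (by fun_prop)
  have hcos := hasDerivAt_id_smul_zero (f := fun ρ : ℝ ↦ cos (τ * √(1 - ρ ^ 2))) (by fun_prop)
  rw [hasDerivAt_pi]
  intro i
  fin_cases i
  · exact hsin.congr_deriv (by simp)
  · exact hcos.neg.congr_deriv (by simp)
  · exact hasDerivAt_sqrt_one_sub_sq_zero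

theorem deriv_c₃_zero_ne_zero (τ : ℝ) : deriv (c₃ τ) 0 ≠ 0 := by
  rw [(hasDerivAt_c₃_zero τ).deriv]
  intro h
  have hsin : sin τ = 0 := congrFun h 0
  have hcos : -cos τ = 0 := congrFun h 1
  simpa [hsin, neg_eq_zero.1 hcos] using sin_sq_add_cos_sq τ

/-- `c₃(ρ)` lies on the unit sphere, satisfies the tangency equation
`x₁ cos(τ x₃) + x₂ sin(τ x₃) = 0`, and `c₃` is smooth on `(-1,1)` with `c₃′(0) ≠ 0`. -/
theorem stmt_6 (τ : ℝ) (hτ : 0 < τ) :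
    (∀ ρ ∈ Set.Ioo (-1 : ℝ) 1,
      ‖(WithLp.equiv 2 (Fin 3 → ℝ)).symm (c₃ τ ρ)‖ = 1 ∧
      c₃ τ ρ 0 * Real.cos (τ * c₃ τ ρ 2) + c₃ τ ρ 1 * Real.sin (τ * c₃ τ ρ 2) = 0) ∧
    ContDiffOn ℝ (⊤ : ℕ∞) (c₃ τ) (Set.Ioo (-1 : ℝ) 1) ∧
    deriv (c₃ τ) 0 ≠ 0 :=
  ⟨fun ρ hρ ↦ ⟨norm_c₃ τ (sub_pos.1 (one_sub_sq_pos hρ)).le, c₃_tangency τ ρ⟩,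
    contDiffOn_c₃ τ, deriv_c₃_zero_ne_zero τ⟩
end
end

section
/- Let τ > 0, let u ∈ (−1,1), let x = c₁(u) = (√(1 − u²) sin(τ u), −√(1 − u²) cos(τ u), u), and let T(x) = c₁′(u)/‖c₁′(u)‖ be the unit tangent vector to the curve c₁ at x. Then |n_τ(x) · T(x)| = (1 − u²)/√(1 + τ²(1 − u²)²), and consequently, with B = −τ n_τ, |B(x) · T(x)| = τ(1 − u²)/√(1 + τ²(1 − u²)²). -/
/-!
In the rotating orthonormal frame `(sin τu, -cos τu, 0)`, `(cos τu, sin τu, 0)`, `(0, 0, 1)`, a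
curve `γ(u) = ρ(u) (sin τu, -cos τu, 0) + (0, 0, u)` has velocity `(ρ', τρ, 1)`, and `n_τ` is `τ⁻¹`
times the second frame vector. Hence `n_τ · γ' = ρ` and `‖γ'‖² = ρ'² + τ²ρ² + 1`. For
`ρ = √(1 - u²)` one has `ρ'² + 1 = ρ⁻²`, so `‖γ'‖ = √(1 + τ²ρ⁴) / ρ` and
`n_τ · T = ρ² / √(1 + τ²ρ⁴)`.
-/

noncomputable section

/-- The helical magnetic potential. -/
def nHelix (τ : ℝ) (x : Fin 3 → ℝ) : Fin 3 → ℝ :=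
  ![τ⁻¹ * Real.cos (τ * x 2), τ⁻¹ * Real.sin (τ * x 2), 0]

/-- Euclidean inner product on ℝ³. -/
def dot3 (x y : Fin 3 → ℝ) : ℝ := x 0 * y 0 + x 1 * y 1 + x 2 * y 2

/-- The unit tangent vector `c₁′(u)/‖c₁′(u)‖` to the curve `c₁`. -/
def unitTangent (τ u : ℝ) : Fin 3 → ℝ :=
  (‖(WithLp.equiv 2 (Fin 3 → ℝ)).symm (deriv (c₁ τ) u)‖)⁻¹ • deriv (c₁ τ) u

lemma dot3_smul_left (a : ℝ) (x y : Fin 3 → ℝ) : dot3 (a • x) y = a * dot3 x y := by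
  simp only [dot3, Pi.smul_apply, smul_eq_mul]
  ring

lemma dot3_smul_right (a : ℝ) (x y : Fin 3 → ℝ) : dot3 x (a • y) = a * dot3 x y := by
  simp only [dot3, Pi.smul_apply, smul_eq_mul]
  ring

lemma norm_withLp_equiv_symm_eq_sqrt_dot3 (x : Fin 3 → ℝ) :
    ‖(WithLp.equiv 2 (Fin 3 → ℝ)).symm x‖ = √(dot3 x x) := by
  simp [EuclideanSpace.norm_eq, Fin.sum_univ_three, dot3, sq]

section HelicalCurve

/-- The curve winding around the third axis with pitch parameter `τ` and variable radius `ρ`,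
parametrized by height; the branch `c₁` is the case `ρ v = √(1 - v ^ 2)`. -/
def helicalCurve (τ : ℝ) (ρ : ℝ → ℝ) (u : ℝ) : Fin 3 → ℝ :=
  ![ρ u * Real.sin (τ * u), -(ρ u * Real.cos (τ * u)), u]

variable {u ρ' : ℝ} {ρ : ℝ → ℝ}

lemma hasDerivAt_helicalCurve (τ : ℝ) (hρ : HasDerivAt ρ ρ' u) :
    HasDerivAt (helicalCurve τ ρ)
      ![ρ' * Real.sin (τ * u) + ρ u * (Real.cos (τ * u) * τ),
        -(ρ' * Real.cos (τ * u) + ρ u * (-Real.sin (τ * u) * τ)), 1] u := by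
  have hangle : HasDerivAt (fun v => τ * v) τ u := hasDerivAt_const_mul τ
  rw [hasDerivAt_pi]
  intro i
  fin_cases i
  · exact hρ.mul hangle.sin
  · exact (hρ.mul hangle.cos).neg
  · exact hasDerivAt_id u

lemma dot3_nHelix_deriv_helicalCurve {τ : ℝ} (hτ : τ ≠ 0) (hρ : DifferentiableAt ℝ ρ u) :
    dot3 (nHelix τ (helicalCurve τ ρ u)) (deriv (helicalCurve τ ρ) u) = ρ u := by
  rw [(hasDerivAt_helicalCurve τ hρ.hasDerivAt).deriv]
  simp only [dot3, nHelix, helicalCurve, Matrix.cons_val]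
  field_simp
  linear_combination τ * ρ u * Real.sin_sq_add_cos_sq (τ * u)

lemma dot3_deriv_helicalCurve_self (τ : ℝ) (hρ : HasDerivAt ρ ρ' u) :
    dot3 (deriv (helicalCurve τ ρ) u) (deriv (helicalCurve τ ρ) u)
      = ρ' ^ 2 + τ ^ 2 * ρ u ^ 2 + 1 := by
  rw [(hasDerivAt_helicalCurve τ hρ).deriv]
  simp only [dot3, Matrix.cons_val]
  linear_combination (ρ' ^ 2 + τ ^ 2 * ρ u ^ 2) * Real.sin_sq_add_cos_sq (τ * u)

end HelicalCurve

section TangencyCurve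

variable {u : ℝ}

lemma hasDerivAt_sqrt_one_sub_sq (hu : 1 - u ^ 2 ≠ 0) :
    HasDerivAt (fun v => √(1 - v ^ 2)) (-u / √(1 - u ^ 2)) u := by
  convert ((hasDerivAt_pow 2 u).const_sub 1).sqrt hu using 1
  push_cast
  rw [← mul_div_mul_left (-u) _ two_ne_zero]
  ring

lemma c₁_eq_helicalCurve (τ : ℝ) : c₁ τ = helicalCurve τ (fun v => √(1 - v ^ 2)) := rfl

lemma dot3_nHelix_deriv_c₁ {τ : ℝ} (hτ : τ ≠ 0) (hu : u ^ 2 < 1) :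
    dot3 (nHelix τ (c₁ τ u)) (deriv (c₁ τ) u) = √(1 - u ^ 2) :=
  dot3_nHelix_deriv_helicalCurve hτ
    (hasDerivAt_sqrt_one_sub_sq (sub_pos.2 hu).ne').differentiableAt

lemma norm_deriv_c₁ (τ : ℝ) (hu : u ^ 2 < 1) :
    ‖(WithLp.equiv 2 (Fin 3 → ℝ)).symm (deriv (c₁ τ) u)‖
      = √(1 + τ ^ 2 * (1 - u ^ 2) ^ 2) / √(1 - u ^ 2) := by
  have hpos : 0 < 1 - u ^ 2 := sub_pos.2 hu
  rw [norm_withLp_equiv_symm_eq_sqrt_dot3, c₁_eq_helicalCurve,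
    dot3_deriv_helicalCurve_self τ (hasDerivAt_sqrt_one_sub_sq hpos.ne'),
    ← Real.sqrt_div (by positivity), div_pow, Real.sq_sqrt hpos.le]
  congr 1
  field_simp
  ring

lemma dot3_nHelix_unitTangent {τ : ℝ} (hτ : τ ≠ 0) (hu : u ^ 2 < 1) :
    dot3 (nHelix τ (c₁ τ u)) (unitTangent τ u)
      = (1 - u ^ 2) / √(1 + τ ^ 2 * (1 - u ^ 2) ^ 2) := by
  rw [unitTangent, dot3_smul_right, norm_deriv_c₁ τ hu, dot3_nHelix_deriv_c₁ hτ hu, inv_div,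
    div_mul_eq_mul_div, Real.mul_self_sqrt (sub_pos.2 hu).le]

end TangencyCurve

/-- `|n_τ(x)·T(x)| = (1 − u²)/√(1 + τ²(1 − u²)²)` and, for `B = −τ n_τ`,
`|B(x)·T(x)| = τ(1 − u²)/√(1 + τ²(1 − u²)²)` along the curve `c₁`. -/
theorem stmt_8 (τ u : ℝ) (hτ : 0 < τ) (hu : u ∈ Set.Ioo (-1 : ℝ) 1) :
    |dot3 (nHelix τ (c₁ τ u)) (unitTangent τ u)|
        = (1 - u ^ 2) / Real.sqrt (1 + τ ^ 2 * (1 - u ^ 2) ^ 2) ∧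
    |dot3 ((-τ) • nHelix τ (c₁ τ u)) (unitTangent τ u)|
        = τ * (1 - u ^ 2) / Real.sqrt (1 + τ ^ 2 * (1 - u ^ 2) ^ 2) := by
  have hu_sq : u ^ 2 < 1 := (sq_lt_one_iff_abs_lt_one u).2 (abs_lt.2 hu)
  have hpotential : |dot3 (nHelix τ (c₁ τ u)) (unitTangent τ u)|
      = (1 - u ^ 2) / √(1 + τ ^ 2 * (1 - u ^ 2) ^ 2) := by
    rw [dot3_nHelix_unitTangent hτ.ne' hu_sq]
    exact abs_of_nonneg (div_nonneg (sub_pos.2 hu_sq).le (Real.sqrt_nonneg _))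
  refine ⟨hpotential, ?_⟩
  rw [dot3_smul_left, abs_mul, abs_neg, abs_of_pos hτ, hpotential, mul_div_assoc]
end
end

section
/- Let μ₀ ∈ (0,1), f(v) = 1 + v² − μ₀ v √(1 + v²), τ₀ = √( (1/2)(1/√(1 − μ₀²) − 1) ), and τ > 0, and define g : [−1,1] → ℝ by g(u) = f(τ(1 − u²)). If τ ≤ τ₀ then the minimum of g over [−1,1] is f(τ), attained exactly at u = 0; if τ > τ₀ then the minimum of g over [−1,1] is f(τ₀), attained exactly at the two points u = ±√(1 − τ₀/τ). -/
noncomputable section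

/-- The profile function `f(v) = 1 + v² − μ₀ v √(1 + v²)`. -/
def fProf (μ₀ v : ℝ) : ℝ := 1 + v ^ 2 - μ₀ * v * Real.sqrt (1 + v ^ 2)

/-- `τ₀ = √((1/2)(1/√(1 − μ₀²) − 1))`. -/
def τ₀ (μ₀ : ℝ) : ℝ := Real.sqrt ((1 / 2) * (1 / Real.sqrt (1 - μ₀ ^ 2) - 1))

/-!
Put `μ₀ = tanh a` and `v = sinh s`. Then `f(v) = (1 + cosh (2s - a) / cosh a) / 2`, which depends
only on `|2s - a|` and strictly increases with it. Hence `f` has a strict global minimum at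
`sinh (a / 2) = τ₀` and is strictly decreasing to the left of it. Since `u ↦ τ (1 - u²)` maps
`[-1, 1]` onto `[0, τ]`, with fibre `±√(1 - v / τ)` over `v`, the minimizers of `g` form the fibre
over `τ` or over `τ₀`, whichever is smaller.
-/

section Profile

open Real Set

lemma fProf_tanh_sinh (a s : ℝ) :
    fProf (tanh a) (sinh s) = (1 + cosh (2 * s - a) / cosh a) / 2 := by
  have hcosh : √(1 + sinh s ^ 2) = cosh s := by rw [← cosh_sq', sqrt_sq (cosh_pos s).le]
  have ha : cosh a ≠ 0 := (cosh_pos a).ne'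
  rw [fProf, hcosh, tanh_eq_sinh_div_cosh, cosh_sub, cosh_two_mul, sinh_two_mul, cosh_sq']
  field_simp
  ring

lemma fProf_tanh_sinh_lt_iff (a s t : ℝ) :
    fProf (tanh a) (sinh s) < fProf (tanh a) (sinh t) ↔ |2 * s - a| < |2 * t - a| := by
  rw [fProf_tanh_sinh, fProf_tanh_sinh, div_lt_div_iff_of_pos_right two_pos, add_lt_add_iff_left,
    div_lt_div_iff_of_pos_right (cosh_pos a), cosh_lt_cosh]

lemma strictAntiOn_fProf_tanh (a : ℝ) :
    StrictAntiOn (fProf (tanh a)) (Iic (sinh (a / 2))) := by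
  intro v _ w hw hvw
  obtain ⟨s, rfl⟩ := sinh_surjective v
  obtain ⟨t, rfl⟩ := sinh_surjective w
  have hst : s < t := sinh_lt_sinh.mp hvw
  have hta : t ≤ a / 2 := sinh_le_sinh.mp hw
  rw [fProf_tanh_sinh_lt_iff, abs_of_nonpos (by linarith), abs_of_nonpos (by linarith)]
  linarith

lemma fProf_tanh_sinh_half_lt {a v : ℝ} (hv : v ≠ sinh (a / 2)) :
    fProf (tanh a) (sinh (a / 2)) < fProf (tanh a) v := by
  obtain ⟨s, rfl⟩ := sinh_surjective v
  have hs : 2 * s - a ≠ 0 := fun h ↦ hv (by rw [show s = a / 2 by linarith])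
  rwa [fProf_tanh_sinh_lt_iff, mul_div_cancel₀ a two_ne_zero, sub_self, abs_zero, abs_pos]

lemma τ₀_tanh {a : ℝ} (ha : 0 ≤ a) : τ₀ (tanh a) = sinh (a / 2) := by
  have hcosh : 1 / √(1 - tanh a ^ 2) = cosh a := by
    rw [← cosh_artanh ⟨neg_one_lt_tanh a, tanh_lt_one a⟩, artanh_tanh]
  have hhalf : cosh a = 1 + 2 * sinh (a / 2) ^ 2 := by
    rw [← mul_div_cancel₀ a (two_ne_zero' ℝ), cosh_two_mul, cosh_sq']
    ring_nf
  have hsinh : 0 ≤ sinh (a / 2) := sinh_nonneg_iff.mpr (div_nonneg ha two_pos.le)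
  rw [τ₀, hcosh, hhalf, add_sub_cancel_left, one_div, inv_mul_cancel_left₀ two_ne_zero,
    sqrt_sq hsinh]

end Profile

section Pullback

open Set

lemma isLeast_image_and_sep_eq {α β : Type*} [Preorder β] {g : α → β} {s t : Set α} {m : β}
    (ht : t.Nonempty) (hts : t ⊆ s) (heq : ∀ x ∈ t, g x = m) (hlt : ∀ x ∈ s \ t, m < g x) :
    IsLeast (g '' s) m ∧ {x ∈ s | g x = m} = t := by
  obtain ⟨x₀, hx₀⟩ := ht
  refine ⟨⟨⟨x₀, hts hx₀, heq x₀ hx₀⟩, ?_⟩, Subset.antisymm ?_ fun x hx ↦ ⟨hts hx, heq x hx⟩⟩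
  · rintro _ ⟨x, hxs, rfl⟩
    by_cases hxt : x ∈ t
    · exact (heq x hxt).ge
    · exact (hlt x ⟨hxs, hxt⟩).le
  · rintro x ⟨hxs, hx⟩
    by_contra hxt
    exact (hlt x ⟨hxs, hxt⟩).ne' hx

lemma mul_one_sub_sq_eq_iff {τ v u : ℝ} (hτ : 0 < τ) (hv : v ≤ τ) :
    τ * (1 - u ^ 2) = v ↔ u = -√(1 - v / τ) ∨ u = √(1 - v / τ) := by
  have hsq : √(1 - v / τ) ^ 2 = 1 - v / τ :=
    Real.sq_sqrt (sub_nonneg.mpr ((div_le_one hτ).mpr hv))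
  rw [or_comm, ← sq_eq_sq_iff_eq_or_eq_neg, hsq, mul_comm, ← eq_div_iff hτ.ne',
    sub_eq_iff_eq_add', ← sub_eq_iff_eq_add, eq_comm]

lemma isLeast_image_comp_mul_one_sub_sq {β : Type*} [Preorder β] {F : ℝ → β} {τ v₀ : ℝ}
    (hτ : 0 < τ) (hv₀ : v₀ ∈ Icc 0 τ) (hmin : ∀ v ∈ Icc 0 τ, v ≠ v₀ → F v₀ < F v) :
    IsLeast ((fun u ↦ F (τ * (1 - u ^ 2))) '' Icc (-1) 1) (F v₀) ∧
      {u ∈ Icc (-1) 1 | F (τ * (1 - u ^ 2)) = F v₀} = {-√(1 - v₀ / τ), √(1 - v₀ / τ)} := by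
  have hfibre (u : ℝ) := mul_one_sub_sq_eq_iff (u := u) hτ hv₀.2
  have hsqrt : √(1 - v₀ / τ) ≤ 1 := Real.sqrt_le_one.mpr (by linarith [div_nonneg hv₀.1 hτ.le])
  have hsqrt_nonneg := Real.sqrt_nonneg (1 - v₀ / τ)
  refine isLeast_image_and_sep_eq (insert_nonempty _ _) ?_ ?_ ?_
  · rintro u (rfl | rfl) <;> constructor <;> linarith
  · exact fun u hu ↦ congrArg F ((hfibre u).mpr hu)
  · rintro u ⟨hu, hne⟩
    have hu_sq : u ^ 2 ≤ 1 := (sq_le_one_iff_abs_le_one u).mpr (abs_le.mpr hu)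
    have hmem : τ * (1 - u ^ 2) ∈ Icc 0 τ :=
      ⟨mul_nonneg hτ.le (sub_nonneg.mpr hu_sq),
        mul_le_of_le_one_right hτ.le (sub_le_self 1 (sq_nonneg u))⟩
    exact hmin _ hmem (mt (hfibre u).mp hne)

end Pullback

/-- Minimization of `g(u) = f(τ(1 − u²))` over `[−1,1]`: for `τ ≤ τ₀` the minimum is
`f(τ)`, attained exactly at `u = 0`; for `τ > τ₀` the minimum is `f(τ₀)`, attained
exactly at `u = ±√(1 − τ₀/τ)`. -/
theorem stmt_17 (μ₀ τ : ℝ) (hμ : μ₀ ∈ Set.Ioo (0 : ℝ) 1) (hτ : 0 < τ) :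
    (τ ≤ τ₀ μ₀ →
      IsLeast ((fun u => fProf μ₀ (τ * (1 - u ^ 2))) '' Set.Icc (-1 : ℝ) 1)
        (fProf μ₀ τ) ∧
      {u ∈ Set.Icc (-1 : ℝ) 1 | fProf μ₀ (τ * (1 - u ^ 2)) = fProf μ₀ τ} = {0}) ∧
    (τ₀ μ₀ < τ →
      IsLeast ((fun u => fProf μ₀ (τ * (1 - u ^ 2))) '' Set.Icc (-1 : ℝ) 1)
        (fProf μ₀ (τ₀ μ₀)) ∧
      {u ∈ Set.Icc (-1 : ℝ) 1 | fProf μ₀ (τ * (1 - u ^ 2)) = fProf μ₀ (τ₀ μ₀)}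
        = {-Real.sqrt (1 - τ₀ μ₀ / τ), Real.sqrt (1 - τ₀ μ₀ / τ)}) := by
  obtain ⟨a, ha, rfl⟩ : ∃ a, 0 ≤ a ∧ Real.tanh a = μ₀ :=
    ⟨Real.artanh μ₀, Real.artanh_nonneg hμ.1.le, Real.tanh_artanh ⟨by linarith [hμ.1], hμ.2⟩⟩
  rw [τ₀_tanh ha]
  constructor
  · intro hle
    have hmin : ∀ v ∈ Set.Icc 0 τ, v ≠ τ → fProf (Real.tanh a) τ < fProf (Real.tanh a) v :=
      fun v hv hne ↦ strictAntiOn_fProf_tanh a (hv.2.trans hle) hle (hv.2.lt_of_ne hne)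
    simpa [hτ.ne'] using isLeast_image_comp_mul_one_sub_sq hτ ⟨hτ.le, le_rfl⟩ hmin
  · intro hlt
    have hnonneg : 0 ≤ Real.sinh (a / 2) := Real.sinh_nonneg_iff.mpr (by linarith)
    exact isLeast_image_comp_mul_one_sub_sq hτ ⟨hnonneg, hlt.le⟩
      fun v _ hne ↦ fProf_tanh_sinh_half_lt hne
end
end

section
/- Fix real parameters h > 0, η, ζ, γ, θ. For smooth functions u : ℝ² × ℝ → ℂ in variables (r, s, t), define D_r = −i ∂_r, D_s = −i ∂_s, D_t = −i ∂_t, and the operators P u = (h^{1/6} D_r u − sin θ · t u − h^{1/3} cos θ · t (η s + ζ r) u) applied twice, plus (h^{1/6} D_s u + cos θ · t u + h^{1/6} γ (r²/2) u − h^{1/3} sin θ · t(η s + ζ r) u) applied twice, plus D_t² u; and L₁ u = sin θ · D_r u − cos θ ((γ/2) r² u + D_s u), L₂ u = cos θ · D_r u + sin θ ((γ/2) r² u + D_s u) − h^{1/6}(ζ r + η s) t u. Then for every smooth u, P u = D_t² u + (t − h^{1/6} L₁)² u + h^{1/3} L₂² u, where (t − h^{1/6} L₁)² u means applying the operator v ↦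 t v − h^{1/6} L₁ v twice and L₂² u means applying L₂ twice. -/
noncomputable section

/-- A point `(r, s, t)` of `ℝ² × ℝ`. -/
abbrev Pt3 := ℝ × ℝ × ℝ

/-- Coercion of a real scalar to ℂ. -/
def rc (a : ℝ) : ℂ := (a : ℂ)

/-- `D_r = −i ∂_r`. -/
def Dr (u : Pt3 → ℂ) (x : Pt3) : ℂ := -Complex.I * fderiv ℝ u x (1, 0, 0)

/-- `D_s = −i ∂_s`. -/
def Ds (u : Pt3 → ℂ) (x : Pt3) : ℂ := -Complex.I * fderiv ℝ u x (0, 1, 0)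

/-- `D_t = −i ∂_t`. -/
def Dt (u : Pt3 → ℂ) (x : Pt3) : ℂ := -Complex.I * fderiv ℝ u x (0, 0, 1)

/-- The first-order factor
`h^{1/6} D_r − sin θ · t − h^{1/3} cos θ · t (η s + ζ r)`. -/
def opA (h η ζ θ : ℝ) (u : Pt3 → ℂ) (x : Pt3) : ℂ :=
  rc (h ^ ((1 : ℝ) / 6)) * Dr u x - rc (Real.sin θ) * rc x.2.2 * u x
    - rc (h ^ ((1 : ℝ) / 3)) * rc (Real.cos θ) * rc x.2.2
        * rc (η * x.2.1 + ζ * x.1) * u x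

/-- The first-order factor
`h^{1/6} D_s + cos θ · t + h^{1/6} γ r²/2 − h^{1/3} sin θ · t (η s + ζ r)`. -/
def opB (h η ζ γ θ : ℝ) (u : Pt3 → ℂ) (x : Pt3) : ℂ :=
  rc (h ^ ((1 : ℝ) / 6)) * Ds u x + rc (Real.cos θ) * rc x.2.2 * u x
    + rc (h ^ ((1 : ℝ) / 6)) * rc γ * rc (x.1 ^ 2 / 2) * u x
    - rc (h ^ ((1 : ℝ) / 3)) * rc (Real.sin θ) * rc x.2.2
        * rc (η * x.2.1 + ζ * x.1) * u x

/-- `L₁ = sin θ D_r − cos θ ((γ/2) r² + D_s)`. -/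
def opL1 (γ θ : ℝ) (u : Pt3 → ℂ) (x : Pt3) : ℂ :=
  rc (Real.sin θ) * Dr u x
    - rc (Real.cos θ) * (rc ((γ / 2) * x.1 ^ 2) * u x + Ds u x)

/-- `L₂ = cos θ D_r + sin θ ((γ/2) r² + D_s) − h^{1/6} (ζ r + η s) t`. -/
def opL2 (h η ζ γ θ : ℝ) (u : Pt3 → ℂ) (x : Pt3) : ℂ :=
  rc (Real.cos θ) * Dr u x
    + rc (Real.sin θ) * (rc ((γ / 2) * x.1 ^ 2) * u x + Ds u x)
    - rc (h ^ ((1 : ℝ) / 6)) * rc (ζ * x.1 + η * x.2.1) * rc x.2.2 * u x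

/-- The operator `v ↦ t v − h^{1/6} L₁ v`. -/
def opM (h γ θ : ℝ) (u : Pt3 → ℂ) (x : Pt3) : ℂ :=
  rc x.2.2 * u x - rc (h ^ ((1 : ℝ) / 6)) * opL1 γ θ u x

/-!
The factors `A`, `B` of `P` and the operators `M = t − h^{1/6} L₁`, `h^{1/6} L₂` all have the form
`−i ∂_v + c` with a real vector `v` and a real potential `c`. Rotating the pair `(A, B)` by the
angle `θ` gives the pair `(h^{1/6} L₂, M)`, and since the rotation has constant coefficients it
preserves the sum of the squares of two such operators, even though they do not commute.
-/

section MagneticDeriv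

open Complex

variable {E F : Type*} [NormedAddCommGroup E] [NormedSpace ℝ E]
  [NormedAddCommGroup F] [NormedSpace ℂ F]

/-- The magnetic derivative `−i ∂_v + c` in the direction `v`, where the real function `c` is the
component along `v` of a vector potential (up to the sign convention). It is the common form of
all first-order factors of a magnetic Schrödinger operator. -/
def magneticDeriv (v : E) (c : E → ℝ) (u : E → F) (x : E) : F :=
  -I • fderiv ℝ u x v + c x • u x

theorem magneticDeriv_smul_add_smul (a b : ℝ) (v w : E) (c d : E → ℝ) (u : E → F) :
    magneticDeriv (a • v + b • w) (a • c + b • d) u =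
      a • magneticDeriv v c u + b • magneticDeriv w d u := by
  ext x
  simp only [magneticDeriv, map_add, map_smul, Pi.add_apply, Pi.smul_apply, smul_eq_mul,
    smul_comm (-I) (_ : ℝ), smul_add, add_smul, mul_smul]
  abel

theorem magneticDeriv_apply_const_smul (k : ℝ) (v : E) (c : E → ℝ) (u : E → F) :
    magneticDeriv v c (k • u) = k • magneticDeriv v c u := by
  ext x
  simp only [magneticDeriv, fderiv_const_smul_field, Pi.smul_apply, smul_apply,
    smul_add, smul_comm k]

theorem magneticDeriv_sq_of_smul_eq {k : ℝ} {L : (E → F) → E → F} {v : E} {c : E → ℝ}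
    (hL : ∀ u, k • L u = magneticDeriv v c u) (u : E → F) :
    magneticDeriv v c (magneticDeriv v c u) = k ^ 2 • L (L u) := by
  rw [← hL u, magneticDeriv_apply_const_smul, ← hL, smul_smul, sq]

theorem magneticDeriv_apply_add (v : E) (c : E → ℝ) {f g : E → F} {x : E}
    (hf : DifferentiableAt ℝ f x) (hg : DifferentiableAt ℝ g x) :
    magneticDeriv v c (f + g) x = magneticDeriv v c f x + magneticDeriv v c g x := by
  simp only [magneticDeriv, fderiv_add hf hg, Pi.add_apply, add_apply, smul_add]
  abel

theorem differentiableAt_magneticDeriv (v : E) {c : E → ℝ} {u : E → F} {x : E}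
    (hc : DifferentiableAt ℝ c x) (hu : ContDiffAt ℝ 2 u x) :
    DifferentiableAt ℝ (magneticDeriv v c u) x := by
  have hu' : DifferentiableAt ℝ (fderiv ℝ u) x :=
    (hu.fderiv_right (m := 1) (by norm_num)).differentiableAt one_ne_zero
  exact ((hu'.clm_apply (differentiableAt_const v)).const_smul (-I)).add
    (hc.smul (hu.differentiableAt two_ne_zero))

theorem magneticDeriv_sq_smul_add_smul (a b : ℝ) (v w : E) {c d : E → ℝ} {u : E → F} {x : E}
    (hc : DifferentiableAt ℝ c x) (hd : DifferentiableAt ℝ d x) (hu : ContDiffAt ℝ 2 u x) :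
    magneticDeriv (a • v + b • w) (a • c + b • d)
        (magneticDeriv (a • v + b • w) (a • c + b • d) u) x =
      a ^ 2 • magneticDeriv v c (magneticDeriv v c u) x +
      (a * b) • (magneticDeriv v c (magneticDeriv w d u) x +
        magneticDeriv w d (magneticDeriv v c u) x) +
      b ^ 2 • magneticDeriv w d (magneticDeriv w d u) x := by
  have hv := (differentiableAt_magneticDeriv v hc hu).const_smul a
  have hw := (differentiableAt_magneticDeriv w hd hu).const_smul b
  simp only [magneticDeriv_smul_add_smul, Pi.add_apply, Pi.smul_apply,
    magneticDeriv_apply_add _ _ hv hw, magneticDeriv_apply_const_smul]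
  module

theorem magneticDeriv_sq_add_sq_rotation {a b : ℝ} (hab : a ^ 2 + b ^ 2 = 1) (v w : E)
    {c d : E → ℝ} {u : E → F} {x : E} (hc : DifferentiableAt ℝ c x)
    (hd : DifferentiableAt ℝ d x) (hu : ContDiffAt ℝ 2 u x) :
    magneticDeriv (a • v + b • w) (a • c + b • d)
          (magneticDeriv (a • v + b • w) (a • c + b • d) u) x +
        magneticDeriv (-b • v + a • w) (-b • c + a • d)
          (magneticDeriv (-b • v + a • w) (-b • c + a • d) u) x =
      magneticDeriv v c (magneticDeriv v c u) x + magneticDeriv w d (magneticDeriv w d u) x := by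
  simp only [magneticDeriv_sq_smul_add_smul _ _ v w hc hd hu]
  linear_combination (norm := module) hab • (magneticDeriv v c (magneticDeriv v c u) x +
    magneticDeriv w d (magneticDeriv w d u) x)

end MagneticDeriv

/-- The zeroth-order part of `opA`, i.e. the `r`-component of the rescaled vector potential. -/
def potentialR (h η ζ θ : ℝ) (x : Pt3) : ℝ :=
  -(Real.sin θ * x.2.2) - h ^ ((1 : ℝ) / 3) * Real.cos θ * x.2.2 * (η * x.2.1 + ζ * x.1)

/-- The zeroth-order part of `opB`, i.e. the `s`-component of the rescaled vector potential. -/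
def potentialS (h η ζ γ θ : ℝ) (x : Pt3) : ℝ :=
  Real.cos θ * x.2.2 + h ^ ((1 : ℝ) / 6) * γ * (x.1 ^ 2 / 2)
    - h ^ ((1 : ℝ) / 3) * Real.sin θ * x.2.2 * (η * x.2.1 + ζ * x.1)

theorem differentiable_potentialR (h η ζ θ : ℝ) : Differentiable ℝ (potentialR h η ζ θ) := by
  unfold potentialR
  fun_prop

theorem differentiable_potentialS (h η ζ γ θ : ℝ) :
    Differentiable ℝ (potentialS h η ζ γ θ) := by
  unfold potentialS
  fun_prop

theorem opA_eq_magneticDeriv (h η ζ θ : ℝ) :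
    opA h η ζ θ = magneticDeriv (h ^ ((1 : ℝ) / 6) • (1, 0, 0)) (potentialR h η ζ θ) := by
  ext u x
  simp only [opA, Dr, rc, magneticDeriv, potentialR, map_smul, Complex.real_smul, smul_eq_mul]
  push_cast
  ring

theorem opB_eq_magneticDeriv (h η ζ γ θ : ℝ) :
    opB h η ζ γ θ = magneticDeriv (h ^ ((1 : ℝ) / 6) • (0, 1, 0)) (potentialS h η ζ γ θ) := by
  ext u x
  simp only [opB, Ds, rc, magneticDeriv, potentialS, map_smul, Complex.real_smul, smul_eq_mul]
  push_cast
  ring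

theorem sq_rpow_one_div_six {h : ℝ} (hh : 0 ≤ h) :
    (h ^ ((1 : ℝ) / 6)) ^ 2 = h ^ ((1 : ℝ) / 3) := by
  rw [← Real.rpow_mul_natCast hh]
  norm_num

theorem opM_eq_rotation (h η ζ γ θ : ℝ) (u : Pt3 → ℂ) :
    opM h γ θ u = -Real.sin θ • opA h η ζ θ u + Real.cos θ • opB h η ζ γ θ u := by
  ext x
  simp only [opM, opL1, opA, opB, rc, Pi.add_apply, Pi.smul_apply, Complex.real_smul]
  push_cast
  linear_combination (-(x.2.2 : ℂ) * u x) * Complex.sin_sq_add_cos_sq θ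

theorem smul_opL2_eq_rotation {h : ℝ} (hh : 0 ≤ h) (η ζ γ θ : ℝ) (u : Pt3 → ℂ) :
    h ^ ((1 : ℝ) / 6) • opL2 h η ζ γ θ u =
      Real.cos θ • opA h η ζ θ u + Real.sin θ • opB h η ζ γ θ u := by
  ext x
  simp only [opL2, opA, opB, rc, ← sq_rpow_one_div_six hh, Pi.add_apply, Pi.smul_apply,
    Complex.real_smul]
  push_cast
  linear_combination ((h ^ ((1 : ℝ) / 6) : ℝ) : ℂ) ^ 2 * x.2.2 * (η * x.2.1 + ζ * x.1) * u x *
    Complex.sin_sq_add_cos_sq θ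

theorem opM_eq_magneticDeriv (h η ζ γ θ : ℝ) :
    opM h γ θ = magneticDeriv
      (-Real.sin θ • h ^ ((1 : ℝ) / 6) • (1, 0, 0) + Real.cos θ • h ^ ((1 : ℝ) / 6) • (0, 1, 0))
      (-Real.sin θ • potentialR h η ζ θ + Real.cos θ • potentialS h η ζ γ θ) := by
  funext u
  rw [opM_eq_rotation h η ζ, opA_eq_magneticDeriv, opB_eq_magneticDeriv,
    magneticDeriv_smul_add_smul]

theorem smul_opL2_eq_magneticDeriv {h : ℝ} (hh : 0 ≤ h) (η ζ γ θ : ℝ) (u : Pt3 → ℂ) :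
    h ^ ((1 : ℝ) / 6) • opL2 h η ζ γ θ u = magneticDeriv
      (Real.cos θ • h ^ ((1 : ℝ) / 6) • (1, 0, 0) + Real.sin θ • h ^ ((1 : ℝ) / 6) • (0, 1, 0))
      (Real.cos θ • potentialR h η ζ θ + Real.sin θ • potentialS h η ζ γ θ) u := by
  rw [smul_opL2_eq_rotation hh, opA_eq_magneticDeriv, opB_eq_magneticDeriv,
    magneticDeriv_smul_add_smul]

theorem stmt_18_general (h η ζ γ θ : ℝ) (hh : 0 ≤ h) (u : Pt3 → ℂ) (x : Pt3)
    (hu : ContDiffAt ℝ 2 u x) :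
    opA h η ζ θ (opA h η ζ θ u) x + opB h η ζ γ θ (opB h η ζ γ θ u) x
        + Dt (Dt u) x
      = Dt (Dt u) x + opM h γ θ (opM h γ θ u) x
        + rc (h ^ ((1 : ℝ) / 3)) * opL2 h η ζ γ θ (opL2 h η ζ γ θ u) x := by
  have rotation := magneticDeriv_sq_add_sq_rotation (Real.cos_sq_add_sin_sq θ)
    (h ^ ((1 : ℝ) / 6) • (1, 0, 0)) (h ^ ((1 : ℝ) / 6) • (0, 1, 0))
    (differentiable_potentialR h η ζ θ x) (differentiable_potentialS h η ζ γ θ x) hu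
  rw [← opA_eq_magneticDeriv, ← opB_eq_magneticDeriv, ← opM_eq_magneticDeriv,
    magneticDeriv_sq_of_smul_eq (smul_opL2_eq_magneticDeriv hh η ζ γ θ),
    sq_rpow_one_div_six hh, Pi.smul_apply, Complex.real_smul] at rotation
  rw [rc]
  linear_combination -rotation

/-- The rescaled model operator factorizes as
`P = D_t² + (t − h^{1/6} L₁)² + h^{1/3} L₂²` on smooth functions. -/
theorem stmt_18 (h η ζ γ θ : ℝ) (hh : 0 < h) (u : Pt3 → ℂ)
    (hu : ContDiff ℝ (⊤ : ℕ∞) u) (x : Pt3) :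
    opA h η ζ θ (opA h η ζ θ u) x + opB h η ζ γ θ (opB h η ζ γ θ u) x
        + Dt (Dt u) x
      = Dt (Dt u) x + opM h γ θ (opM h γ θ u) x
        + rc (h ^ ((1 : ℝ) / 3)) * opL2 h η ζ γ θ (opL2 h η ζ γ θ u) x := by
  exact stmt_18_general h η ζ γ θ hh.le u x (contDiff_infty.1 hu 2).contDiffAt
end
end
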